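/- Let E = {e₀,e₁,e₂,…} with e_k identified with a^k b ∈ ℌ̂ = 𝒞⟨a,b⟩, and let ⋄_E be a commutative 𝒞-bilinear map on 𝒞·E of fixed length satisfying e_k ⋄_E e_l = a^{k+l}(e₀ ⋄_E e₀) for all k,l ≥ 0, for some choice of e₀ ⋄_E e₀. Let ⋄_L be the commutative 𝒞-bilinear map on 𝒞·{a,b} with a⋄_La = ℏ²·σ(e₀⋄_Ee₀), a⋄_Lb = b⋄_La = −ab, b⋄_Lb = −bb. Denote by ⧢̂_E and ⧢̂_L the generalized quasi-shuffle products associated to ⋄_E and ⋄_L respectively. Then for all w, v ∈ ℌ̂⁰ one has σ(σ(w) ⧢̂_E σ(v)) = w ⧢̂_L v. -/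

import Mathlib

/-! Write `A_k = a b^k`. Up to a power of `ℏ`, `σ` exchanges `e_k = a^k b` and `A_k`, and every
admissible word is a word in the blocks `A_k`; so both sides of the duality need only be compared
on such words.

With `b ⋄_L a = -ab` and `b ⋄_L b = -bb` a leading `b` of either factor can be pulled out of
`⧢̂_L` (`shL_b_left`, `shL_b_right`). Hence, on words in the `A_k`, `⧢̂_L` is the quasi-shuffle
product with `A_k ⋄ A_l = (a ⋄_L a) b^(k+l)`, defined by splitting off first blocks (`shL_aWord`).
Since `σ` reverses words, conjugating `⧢̂_E` by `σ` gives a product obeying the same recursion, but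
splitting off last blocks (`sigma_shE_snoc`); the choice of `a ⋄_L a` is exactly what makes the two
contraction terms agree. The two recursions define the same product (`quasiShuffle_unique`): each
enumerates lattice paths, one from the start and one from the end. -/

/- STATEMENT 17 (Proposition on the generalized duality): Let e_k = a^k b ∈ ℌ̂ =
𝒞⟨a,b⟩, and let ⋄_E be a commutative 𝒞-bilinear map of fixed length on 𝒞·E with
e_k ⋄_E e_l = a^{k+l}(e₀ ⋄_E e₀), for some choice of e₀ ⋄_E e₀ (modelled as a
scalar multiple c₀ • e_{w₀} of an E-word). Let ⋄_L be given by
a⋄_La = ℏ²σ(e₀⋄_Ee₀), a⋄_Lb = b⋄_La = −ab, b⋄_Lb = −bb, where σ is the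
𝒞-linear anti-automorphism of ℌ̂ with σ(a) = ℏb, σ(b) = ℏ⁻¹a. Then for the
associated generalized quasi-shuffle products ⧢̂_E, ⧢̂_L and all w, v ∈ ℌ̂⁰:
σ(σ(w) ⧢̂_E σ(v)) = w ⧢̂_L v. -/

noncomputable section

/-- The two letters a, b of ℌ̂ = 𝒞⟨a,b⟩. -/
inductive AB : Type
  | a : AB
  | b : AB
  deriving DecidableEq

/-- 𝒞 = ℚ[ℏ,ℏ⁻¹]. -/
abbrev CC : Type := LaurentPolynomial ℚ

/-- A word in the letters a, b as an element of ℌ̂ = 𝒞⟨a,b⟩. -/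
def ofW (w : List AB) : MonoidAlgebra CC (FreeMonoid AB) :=
  MonoidAlgebra.of CC (FreeMonoid AB) (FreeMonoid.ofList w)

/-- The word e_{k₁}⋯e_{k_r} ∈ ℌ̂, where e_k = a^k b. -/
def eWord (ks : List ℕ) : List AB :=
  (ks.map fun k => List.replicate k AB.a ++ [AB.b]).flatten

/-- Exchanging the letters a and b. -/
def swapAB : AB → AB
  | AB.a => AB.b
  | AB.b => AB.a

/-- The index list (k₁,…,k_r) is admissible: either empty or k₁ ≥ 1. -/
def Admissible (l : List ℕ) : Prop := ∀ h : l ≠ [], 1 ≤ l.head h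

/-- ℌ̂⁰, the 𝒞-span of 𝟏 and the admissible words e_{k₁}⋯e_{k_r}, k₁ ≥ 1. -/
def H0 : Submodule CC (MonoidAlgebra CC (FreeMonoid AB)) :=
  Submodule.span CC {x | ∃ ks : List ℕ, Admissible ks ∧ x = ofW (eWord ks)}

/-! ### Words -/

lemma ofW_nil : ofW [] = 1 := map_one (MonoidAlgebra.of CC (FreeMonoid AB))

lemma ofW_append (u v : List AB) : ofW (u ++ v) = ofW u * ofW v :=
  map_mul (MonoidAlgebra.of CC (FreeMonoid AB)) (FreeMonoid.ofList u) (FreeMonoid.ofList v)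

lemma ofW_cons (x : AB) (v : List AB) : ofW (x :: v) = ofW [x] * ofW v :=
  ofW_append [x] v

/-- A linear identity on `ℌ̂` may be checked on words. -/
lemma linearMap_ext_ofW {M : Type*} [AddCommMonoid M] [Module CC M]
    {f g : MonoidAlgebra CC (FreeMonoid AB) →ₗ[CC] M}
    (h : ∀ w, f (ofW w) = g (ofW w)) : f = g := by
  refine MonoidAlgebra.lhom_ext' fun m => LinearMap.ext_ring ?_
  exact h (FreeMonoid.toList m)

/-- The word `A_{k₁}⋯A_{k_r}`, where `A_k = a b^k` is, up to a power of `ℏ`, the image of `e_k`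
under `σ`. -/
def aWord (ks : List ℕ) : List AB :=
  (ks.map fun k => AB.a :: List.replicate k AB.b).flatten

lemma aWord_cons (k : ℕ) (ks : List ℕ) :
    aWord (k :: ks) = AB.a :: (List.replicate k AB.b ++ aWord ks) := by
  simp [aWord]

lemma eWord_cons (k : ℕ) (ks : List ℕ) : eWord (k :: ks) = eWord [k] ++ eWord ks := by
  simp [eWord]

lemma aWord_append (ks ls : List ℕ) : aWord (ks ++ ls) = aWord ks ++ aWord ls := by
  simp [aWord]

lemma exists_aWord (w : List AB) :
    ∃ (n : ℕ) (ks : List ℕ), w = List.replicate n AB.b ++ aWord ks := by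
  induction w with
  | nil => exact ⟨0, [], rfl⟩
  | cons x w ih =>
    obtain ⟨n, ks, rfl⟩ := ih
    cases x with
    | a => exact ⟨0, n :: ks, by simp [aWord_cons]⟩
    | b => exact ⟨n + 1, ks, by simp [List.replicate_succ]⟩

/-- An admissible word starts with `a`, hence factors into blocks `A_k`. -/
lemma exists_aWord_of_admissible (ks : List ℕ) (h : Admissible ks) :
    ∃ ls, eWord ks = aWord ls := by
  cases ks with
  | nil => exact ⟨[], rfl⟩
  | cons k ks =>
    have hk : 1 ≤ k := h (by simp)
    obtain ⟨m, rfl⟩ : ∃ m, k = m + 1 := ⟨k - 1, by omega⟩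
    obtain ⟨n, ls, hn⟩ :=
      exists_aWord (List.replicate m AB.a ++ AB.b :: eWord ks)
    refine ⟨n :: ls, ?_⟩
    rw [aWord_cons, ← hn]
    simp [eWord, List.replicate_succ]

lemma reverse_swap_aWord (ks : List ℕ) :
    ((aWord ks).map swapAB).reverse = eWord ks.reverse := by
  induction ks with
  | nil => rfl
  | cons k ks ih =>
    rw [aWord_cons]
    simp only [List.map_cons, List.map_append, List.reverse_cons, List.reverse_append, ih]
    simp [swapAB, eWord]

lemma count_aWord (ks : List ℕ) :
    (((aWord ks).count AB.a : ℤ) - ((aWord ks).count AB.b : ℤ)) = ks.length - ks.sum := by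
  induction ks with
  | nil => simp [aWord]
  | cons k ks ih =>
    rw [aWord_cons]
    simp only [List.count_cons, List.count_append, List.count_replicate, List.length_cons,
      List.sum_cons]
    simp only [Nat.cast_add, beq_self_eq_true, if_true, reduceCtorEq, beq_iff_eq, if_false,
      Nat.cast_zero, Nat.cast_one]
    linarith

/-! ### Reversing the quasi-shuffle recursion -/

section Recursion

variable {R : Type*} [Ring R] {x : ℕ → R} {D : ℕ → ℕ → R}

/-- A quasi-shuffle product defined by splitting off first letters also satisfies the recursion
that splits off last letters: both enumerate the same lattice paths, so neither associativity nor
commutativity of the letter product `D` matters. -/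
lemma quasiShuffle_snoc {F : List ℕ → List ℕ → R}
    (hF1 : ∀ l, F [] l = (l.map x).prod) (hF2 : ∀ l, F l [] = (l.map x).prod)
    (hF : ∀ k l ks ls, F (k :: ks) (l :: ls) =
      x k * F ks (l :: ls) + x l * F (k :: ks) ls + D k l * F ks ls)
    (ks ls : List ℕ) (k l : ℕ) :
    F (ks ++ [k]) (ls ++ [l]) =
      F ks (ls ++ [l]) * x k + F (ks ++ [k]) ls * x l + F ks ls * D k l := by
  induction ks generalizing ls with
  | nil =>
    induction ls with
    | nil =>
      simp [hF, hF1, hF2]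
      abel
    | cons c ls ih =>
      have h1 := hF k c [] ls
      have h2 := hF k c [] (ls ++ [l])
      simp only [List.nil_append, List.cons_append] at ih ⊢
      rw [h2, ih, h1]
      simp only [hF1, List.map_cons, List.map_append, List.prod_cons, List.prod_append,
        List.map_nil, List.prod_nil]
      noncomm_ring
  | cons d ks ihk =>
    induction ls with
    | nil =>
      have h1 := hF d l ks []
      have h2 := hF d l (ks ++ [k]) []
      have h3 := ihk []
      simp only [List.nil_append, List.cons_append] at h3 ⊢
      rw [h2, h3, h1]
      simp only [hF2, List.map_cons, List.map_append, List.prod_cons, List.prod_append,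
        List.map_nil, List.prod_nil]
      noncomm_ring
    | cons c ls ihl =>
      have h3 := ihk (c :: ls)
      have h4 := ihk ls
      simp only [List.cons_append] at ihl h3 h4 ⊢
      rw [hF d c (ks ++ [k]) (ls ++ [l]), h3, ihl, h4, hF d c ks (ls ++ [l]),
        hF d c (ks ++ [k]) ls, hF d c ks ls]
      noncomm_ring

lemma quasiShuffle_unique {F G : List ℕ → List ℕ → R}
    (hF1 : ∀ l, F [] l = (l.map x).prod) (hF2 : ∀ l, F l [] = (l.map x).prod)
    (hF : ∀ k l ks ls, F (k :: ks) (l :: ls) =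
      x k * F ks (l :: ls) + x l * F (k :: ks) ls + D k l * F ks ls)
    (hG1 : ∀ l, G [] l = (l.map x).prod) (hG2 : ∀ l, G l [] = (l.map x).prod)
    (hG : ∀ k l ks ls, G (ks ++ [k]) (ls ++ [l]) =
      G ks (ls ++ [l]) * x k + G (ks ++ [k]) ls * x l + G ks ls * D k l)
    (ks ls : List ℕ) : G ks ls = F ks ls := by
  induction ks using List.reverseRecOn generalizing ls with
  | nil => rw [hG1, hF1]
  | append_singleton ks k ihk =>
    induction ls using List.reverseRecOn with
    | nil => rw [hG2, hF2]
    | append_singleton ls l ihl =>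
      rw [hG, quasiShuffle_snoc hF1 hF2 hF, ihk, ihk, ihl]

end Recursion

lemma ofW_aWord (ks : List ℕ) :
    ofW (aWord ks) = (ks.map fun k => ofW (AB.a :: List.replicate k AB.b)).prod := by
  induction ks with
  | nil => simp [aWord, ofW_nil]
  | cons k ks ih =>
    rw [List.map_cons, List.prod_cons, ← ih, ← ofW_append, aWord_cons, List.cons_append]

/-! ### The anti-automorphism -/

/-- The hypothesis on `σ`: it reverses a word, exchanges `a` and `b`, and scales by
`ℏ^(#a - #b)`. -/
def IsSigma (sigma : MonoidAlgebra CC (FreeMonoid AB) →ₗ[CC]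
    MonoidAlgebra CC (FreeMonoid AB)) : Prop :=
  ∀ w : List AB, sigma (ofW w) =
    (LaurentPolynomial.T ((w.count AB.a : ℤ) - (w.count AB.b : ℤ)) : CC)
      • ofW ((w.map swapAB).reverse)

section Sigma

variable {sigma : MonoidAlgebra CC (FreeMonoid AB) →ₗ[CC] MonoidAlgebra CC (FreeMonoid AB)}

lemma IsSigma.map_mul (hs : IsSigma sigma) (x y : MonoidAlgebra CC (FreeMonoid AB)) :
    sigma (x * y) = sigma y * sigma x := by
  have h : (LinearMap.mul CC (MonoidAlgebra CC (FreeMonoid AB))).compr₂ sigma =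
      (LinearMap.mul CC (MonoidAlgebra CC (FreeMonoid AB))).flip.compl₁₂ sigma sigma := by
    refine linearMap_ext_ofW fun u => linearMap_ext_ofW fun v => ?_
    simp only [LinearMap.compr₂_apply, LinearMap.compl₁₂_apply, LinearMap.flip_apply,
      LinearMap.mul_apply_apply]
    rw [← ofW_append, hs, hs, hs, smul_mul_smul_comm, ← ofW_append, ← LaurentPolynomial.T_add]
    congr 2
    · simp only [List.count_append, Nat.cast_add]
      ring
    · simp
  simpa using LinearMap.congr_fun₂ h x y

lemma IsSigma.map_aWord (hs : IsSigma sigma) (ks : List ℕ) :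
    sigma (ofW (aWord ks)) =
      (LaurentPolynomial.T ((ks.length : ℤ) - ks.sum) : CC) • ofW (eWord ks.reverse) := by
  rw [hs, count_aWord, reverse_swap_aWord]

lemma IsSigma.map_aWord_snoc (hs : IsSigma sigma) (ks : List ℕ) (k : ℕ) :
    sigma (ofW (aWord (ks ++ [k]))) =
      ((LaurentPolynomial.T (1 - (k : ℤ)) : CC) *
        LaurentPolynomial.T ((ks.length : ℤ) - ks.sum)) • ofW (eWord (k :: ks.reverse)) := by
  rw [hs.map_aWord, ← LaurentPolynomial.T_add]
  congr 2
  · simp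
    ring
  · simp

lemma IsSigma.map_eWord_singleton (hs : IsSigma sigma) (k : ℕ) :
    sigma (ofW (eWord [k])) =
      (LaurentPolynomial.T ((k : ℤ) - 1) : CC) • ofW (AB.a :: List.replicate k AB.b) := by
  rw [hs]
  simp [eWord, swapAB, List.count_replicate]

lemma IsSigma.map_replicate (hs : IsSigma sigma) (n : ℕ) :
    sigma (ofW (List.replicate n AB.a)) =
      (LaurentPolynomial.T (n : ℤ) : CC) • ofW (List.replicate n AB.b) := by
  rw [hs]
  simp [swapAB, List.count_replicate]

lemma IsSigma.sigma_sigma (hs : IsSigma sigma) (x : MonoidAlgebra CC (FreeMonoid AB)) :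
    sigma (sigma x) = x := by
  have hswap : ∀ w : List AB, (w.map swapAB).map swapAB = w := fun w => by
    induction w with
    | nil => rfl
    | cons x w ih => cases x <;> simpa [swapAB] using ih
  have hcount : ∀ w : List AB, (w.map swapAB).count AB.a = w.count AB.b ∧
      (w.map swapAB).count AB.b = w.count AB.a := fun w => by
    induction w with
    | nil => simp
    | cons x w ih => cases x <;> simp [swapAB, ih.1, ih.2]
  have h : sigma ∘ₗ sigma = LinearMap.id := by
    refine linearMap_ext_ofW fun w => ?_
    rw [LinearMap.comp_apply, hs, map_smul, hs, smul_smul, ← LaurentPolynomial.T_add,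
      List.map_reverse, List.reverse_reverse, hswap, List.count_reverse, List.count_reverse,
      (hcount w).1, (hcount w).2]
    simp
  exact LinearMap.congr_fun h x

end Sigma

/-! ### The product on the letters `a`, `b` -/

section ShL

lemma contraction_left {R : Type*} [Ring R] (p q s t : R) :
    p * s + q * (p * t) + -(q * p) * t = p * s := by
  noncomm_ring

lemma contraction_right {R : Type*} [Ring R] (p q s t : R) :
    q * (p * t) + p * s + -(q * p) * t = p * s := by
  noncomm_ring

variable {dL : AB → AB → MonoidAlgebra CC (FreeMonoid AB)}
  {shL : MonoidAlgebra CC (FreeMonoid AB) →ₗ[CC]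
    MonoidAlgebra CC (FreeMonoid AB) →ₗ[CC] MonoidAlgebra CC (FreeMonoid AB)}

/-- A leading `b` of the left factor can be pulled out: the shuffle term in which the right factor
contributes its first letter is cancelled by the contraction term. -/
lemma shL_b_left (hab : dL AB.b AB.a = -ofW [AB.a, AB.b])
    (hbb : dL AB.b AB.b = -ofW [AB.b, AB.b]) (hone : ∀ x, shL x 1 = x)
    (hsh : ∀ (α β : AB) (w v : List AB),
      shL (ofW (α :: w)) (ofW (β :: v)) =
        ofW [α] * shL (ofW w) (ofW (β :: v)) + ofW [β] * shL (ofW (α :: w)) (ofW v)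
        + dL α β * shL (ofW w) (ofW v)) (w v : List AB) :
    shL (ofW (AB.b :: w)) (ofW v) = ofW [AB.b] * shL (ofW w) (ofW v) := by
  induction v with
  | nil => rw [ofW_nil, hone, hone, ofW_cons]
  | cons y v ih =>
    rw [hsh, ih]
    cases y
    · rw [hab, ofW_cons AB.a [AB.b]]
      exact contraction_left _ _ _ _
    · rw [hbb, ofW_cons AB.b [AB.b]]
      exact contraction_left _ _ _ _

lemma shL_b_right (hab : dL AB.a AB.b = -ofW [AB.a, AB.b])
    (hbb : dL AB.b AB.b = -ofW [AB.b, AB.b]) (hone : ∀ x, shL 1 x = x)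
    (hsh : ∀ (α β : AB) (w v : List AB),
      shL (ofW (α :: w)) (ofW (β :: v)) =
        ofW [α] * shL (ofW w) (ofW (β :: v)) + ofW [β] * shL (ofW (α :: w)) (ofW v)
        + dL α β * shL (ofW w) (ofW v)) (w v : List AB) :
    shL (ofW w) (ofW (AB.b :: v)) = ofW [AB.b] * shL (ofW w) (ofW v) := by
  induction w with
  | nil => rw [ofW_nil, hone, hone, ofW_cons]
  | cons y w ih =>
    rw [hsh, ih]
    cases y
    · rw [hab, ofW_cons AB.a [AB.b]]
      exact contraction_right _ _ _ _
    · rw [hbb, ofW_cons AB.b [AB.b]]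
      exact contraction_right _ _ _ _

lemma shL_replicate_left
    (h : ∀ w v, shL (ofW (AB.b :: w)) (ofW v) = ofW [AB.b] * shL (ofW w) (ofW v))
    (n : ℕ) (w v : List AB) :
    shL (ofW (List.replicate n AB.b ++ w)) (ofW v) =
      ofW (List.replicate n AB.b) * shL (ofW w) (ofW v) := by
  induction n with
  | zero => simp [ofW_nil]
  | succ n ih =>
    rw [List.replicate_succ, List.cons_append, h, ih, ofW_cons AB.b (List.replicate n AB.b),
      mul_assoc]

lemma shL_replicate_right
    (h : ∀ w v, shL (ofW w) (ofW (AB.b :: v)) = ofW [AB.b] * shL (ofW w) (ofW v))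
    (n : ℕ) (w v : List AB) :
    shL (ofW w) (ofW (List.replicate n AB.b ++ v)) =
      ofW (List.replicate n AB.b) * shL (ofW w) (ofW v) := by
  induction n with
  | zero => simp [ofW_nil]
  | succ n ih =>
    rw [List.replicate_succ, List.cons_append, h, ih, ofW_cons AB.b (List.replicate n AB.b),
      mul_assoc]

/-- On words in the blocks `A_k = a b^k` the product `⧢̂_L` is again a quasi-shuffle product, with
`A_k ⋄ A_l = (a ⋄_L a) b^(k+l)`. -/
lemma shL_aWord
    (hl : ∀ w v, shL (ofW (AB.b :: w)) (ofW v) = ofW [AB.b] * shL (ofW w) (ofW v))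
    (hr : ∀ w v, shL (ofW w) (ofW (AB.b :: v)) = ofW [AB.b] * shL (ofW w) (ofW v))
    (hsh : ∀ (α β : AB) (w v : List AB),
      shL (ofW (α :: w)) (ofW (β :: v)) =
        ofW [α] * shL (ofW w) (ofW (β :: v)) + ofW [β] * shL (ofW (α :: w)) (ofW v)
        + dL α β * shL (ofW w) (ofW v)) (k l : ℕ) (ks ls : List ℕ) :
    shL (ofW (aWord (k :: ks))) (ofW (aWord (l :: ls))) =
      ofW (AB.a :: List.replicate k AB.b) * shL (ofW (aWord ks)) (ofW (aWord (l :: ls)))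
      + ofW (AB.a :: List.replicate l AB.b) * shL (ofW (aWord (k :: ks))) (ofW (aWord ls))
      + dL AB.a AB.a * ofW (List.replicate (k + l) AB.b)
        * shL (ofW (aWord ks)) (ofW (aWord ls)) := by
  simp only [aWord_cons]
  rw [hsh, shL_replicate_left hl, shL_replicate_right hr, shL_replicate_left hl,
    shL_replicate_right hr, ofW_cons AB.a (List.replicate k AB.b),
    ofW_cons AB.a (List.replicate l AB.b), List.replicate_add, ofW_append]
  simp only [mul_assoc]

end ShL

/-! ### The product on the letters `e_k`, transported by the anti-automorphism -/

/-- Conjugating `⧢̂_E` by `σ` gives a product on words in the blocks `A_k` that satisfies, from the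
right, the same recursion as `⧢̂_L` from the left. -/
lemma sigma_shE_snoc
    {sigma : MonoidAlgebra CC (FreeMonoid AB) →ₗ[CC] MonoidAlgebra CC (FreeMonoid AB)}
    (hs : IsSigma sigma) (c0 : CC) (w0 : List ℕ)
    (shE : MonoidAlgebra CC (FreeMonoid AB) →ₗ[CC]
        MonoidAlgebra CC (FreeMonoid AB) →ₗ[CC] MonoidAlgebra CC (FreeMonoid AB))
    (hshE : ∀ (k l : ℕ) (ks ls : List ℕ),
      shE (ofW (eWord (k :: ks))) (ofW (eWord (l :: ls))) =
        ofW (eWord [k]) * shE (ofW (eWord ks)) (ofW (eWord (l :: ls)))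
        + ofW (eWord [l]) * shE (ofW (eWord (k :: ks))) (ofW (eWord ls))
        + (c0 • (ofW (List.replicate (k + l) AB.a) * ofW (eWord w0)))
            * shE (ofW (eWord ks)) (ofW (eWord ls)))
    (k l : ℕ) (ks ls : List ℕ) :
    sigma (shE (sigma (ofW (aWord (ks ++ [k])))) (sigma (ofW (aWord (ls ++ [l]))))) =
      sigma (shE (sigma (ofW (aWord ks))) (sigma (ofW (aWord (ls ++ [l])))))
        * ofW (AB.a :: List.replicate k AB.b)
      + sigma (shE (sigma (ofW (aWord (ks ++ [k])))) (sigma (ofW (aWord ls))))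
        * ofW (AB.a :: List.replicate l AB.b)
      + sigma (shE (sigma (ofW (aWord ks))) (sigma (ofW (aWord ls))))
        * ((LaurentPolynomial.T 2 : CC) • sigma (c0 • ofW (eWord w0))
          * ofW (List.replicate (k + l) AB.b)) := by
  -- the powers of `ℏ` coming from `σ(A_k)`, `σ(A_l)` against those from `σ(e_k)`, `σ(e_l)`
  -- and `σ(a^(k+l))`
  have hT : ∀ k : ℕ, (LaurentPolynomial.T (1 - (k : ℤ)) : CC) *
      LaurentPolynomial.T ((k : ℤ) - 1) = 1 := fun k => by
    rw [← LaurentPolynomial.T_add]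
    simp
  have hT2 : (LaurentPolynomial.T (1 - (k : ℤ)) : CC) * LaurentPolynomial.T (1 - (l : ℤ)) *
      LaurentPolynomial.T ((k + l : ℕ) : ℤ) = LaurentPolynomial.T 2 := by
    rw [← LaurentPolynomial.T_add, ← LaurentPolynomial.T_add]
    congr 1
    push_cast
    ring
  simp only [hs.map_aWord_snoc]
  simp only [hs.map_aWord, map_smul, LinearMap.smul_apply, hshE, map_add, hs.map_mul,
    hs.map_eWord_singleton, hs.map_replicate, smul_add, smul_mul_assoc, mul_smul_comm, smul_smul,
    mul_assoc]
  refine congrArg₂ (· + ·) (congrArg₂ (· + ·) (congrArg (· • _) ?_) (congrArg (· • _) ?_))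
    (congrArg (· • _) ?_)
  · linear_combination (LaurentPolynomial.T (1 - (l : ℤ)) *
      LaurentPolynomial.T ((ks.length : ℤ) - ks.sum) *
      LaurentPolynomial.T ((ls.length : ℤ) - ls.sum) : CC) * hT k
  · linear_combination (LaurentPolynomial.T (1 - (k : ℤ)) *
      LaurentPolynomial.T ((ks.length : ℤ) - ks.sum) *
      LaurentPolynomial.T ((ls.length : ℤ) - ls.sum) : CC) * hT l
  · linear_combination (c0 * LaurentPolynomial.T ((ks.length : ℤ) - ks.sum) *
      LaurentPolynomial.T ((ls.length : ℤ) - ls.sum) : CC) * hT2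

theorem generalized_duality
    -- σ : the 𝒞-linear anti-automorphism of ℌ̂ with σ(a) = ℏb, σ(b) = ℏ⁻¹a:
    -- on a word it reverses the word, exchanges a and b, and multiplies by
    -- ℏ^(#a's − #b's)
    (sigma : MonoidAlgebra CC (FreeMonoid AB) →ₗ[CC]
        MonoidAlgebra CC (FreeMonoid AB))
    (hsigma : ∀ w : List AB,
      sigma (ofW w) =
        (LaurentPolynomial.T ((w.count AB.a : ℤ) - (w.count AB.b : ℤ)) : CC)
          • ofW ((w.map swapAB).reverse))
    -- the choice of e₀ ⋄_E e₀ = c₀ • e_{w₀}, so that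
    -- e_k ⋄_E e_l = a^{k+l}(e₀ ⋄_E e₀) (a commutative map of fixed length)
    (c0 : CC) (w0 : List ℕ)
    -- ⧢̂_E : the generalized quasi-shuffle product associated to ⋄_E (a
    -- 𝒞-bilinear product, defined by recursion on words in the letters e_k)
    (shE : MonoidAlgebra CC (FreeMonoid AB) →ₗ[CC]
        MonoidAlgebra CC (FreeMonoid AB) →ₗ[CC] MonoidAlgebra CC (FreeMonoid AB))
    (hshE_one : ∀ x, shE 1 x = x) (hshE_one' : ∀ x, shE x 1 = x)
    (hshE : ∀ (k l : ℕ) (ks ls : List ℕ),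
      shE (ofW (eWord (k :: ks))) (ofW (eWord (l :: ls))) =
        ofW (eWord [k]) * shE (ofW (eWord ks)) (ofW (eWord (l :: ls)))
        + ofW (eWord [l]) * shE (ofW (eWord (k :: ks))) (ofW (eWord ls))
        + (c0 • (ofW (List.replicate (k + l) AB.a) * ofW (eWord w0)))
            * shE (ofW (eWord ks)) (ofW (eWord ls)))
    -- ⋄_L : a⋄_La = ℏ²σ(e₀⋄_Ee₀), a⋄_Lb = b⋄_La = −ab, b⋄_Lb = −bb
    (dL : AB → AB → MonoidAlgebra CC (FreeMonoid AB))
    (hdL_aa : dL AB.a AB.a =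
      (LaurentPolynomial.T 2 : CC) • sigma (c0 • ofW (eWord w0)))
    (hdL_ab : dL AB.a AB.b = -ofW [AB.a, AB.b])
    (hdL_ba : dL AB.b AB.a = -ofW [AB.a, AB.b])
    (hdL_bb : dL AB.b AB.b = -ofW [AB.b, AB.b])
    -- ⧢̂_L : the generalized quasi-shuffle product associated to ⋄_L
    (shL : MonoidAlgebra CC (FreeMonoid AB) →ₗ[CC]
        MonoidAlgebra CC (FreeMonoid AB) →ₗ[CC] MonoidAlgebra CC (FreeMonoid AB))
    (hshL_one : ∀ x, shL 1 x = x) (hshL_one' : ∀ x, shL x 1 = x)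
    (hshL : ∀ (α β : AB) (w v : List AB),
      shL (ofW (α :: w)) (ofW (β :: v)) =
        ofW [α] * shL (ofW w) (ofW (β :: v))
        + ofW [β] * shL (ofW (α :: w)) (ofW v)
        + dL α β * shL (ofW w) (ofW v)) :
    -- conclusion: σ(σ(w) ⧢̂_E σ(v)) = w ⧢̂_L v for all w, v ∈ ℌ̂⁰
    ∀ w ∈ H0, ∀ v ∈ H0, sigma (shE (sigma w) (sigma v)) = shL w v := by
  have hs : IsSigma sigma := hsigma
  have hl := shL_b_left hdL_ba hdL_bb hshL_one' hshL
  have hr := shL_b_right hdL_ab hdL_bb hshL_one hshL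
  have sigma_one : sigma 1 = 1 := by simpa [ofW_nil] using hsigma []
  have key : ∀ ks ls : List ℕ,
      sigma (shE (sigma (ofW (aWord ks))) (sigma (ofW (aWord ls)))) =
        shL (ofW (aWord ks)) (ofW (aWord ls)) := by
    have hnil : ofW (aWord []) = 1 := ofW_nil
    refine quasiShuffle_unique
      (F := fun ks ls => shL (ofW (aWord ks)) (ofW (aWord ls)))
      (G := fun ks ls => sigma (shE (sigma (ofW (aWord ks))) (sigma (ofW (aWord ls)))))
      (x := fun k => ofW (AB.a :: List.replicate k AB.b))
      (D := fun k l => dL AB.a AB.a * ofW (List.replicate (k + l) AB.b))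
      (fun l => ?_) (fun l => ?_) (shL_aWord hl hr hshL) (fun l => ?_) (fun l => ?_)
      (fun k l ks ls => ?_)
    · simp only [hnil, hshL_one, ofW_aWord]
    · simp only [hnil, hshL_one', ofW_aWord]
    · simp only [hnil, sigma_one, hshE_one, hs.sigma_sigma, ofW_aWord]
    · simp only [hnil, sigma_one, hshE_one', hs.sigma_sigma, ofW_aWord]
    · simp only [hdL_aa]
      exact sigma_shE_snoc hs c0 w0 shE hshE k l ks ls
  intro w hw v hv
  induction hw, hv using Submodule.span_induction₂ with
  | mem_mem w v hw hv =>
    obtain ⟨ks, hks, rfl⟩ := hw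
    obtain ⟨ls, hls, rfl⟩ := hv
    obtain ⟨ks', hk⟩ := exists_aWord_of_admissible ks hks
    obtain ⟨ls', hl'⟩ := exists_aWord_of_admissible ls hls
    rw [hk, hl', key]
  | zero_left => simp
  | zero_right => simp
  | add_left x y z _ _ _ h1 h2 => simp [h1, h2]
  | add_right x y z _ _ _ h1 h2 => simp [h1, h2]
  | smul_left r x y _ _ h => simp [h]
  | smul_right r x y _ _ h => simp [h]
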